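/- arXiv:1707.06157 — 3 statements merged into one kernel-verified Lean document; each statement's English description precedes it below -/
import Mathlib

section
/- Let ι be a nonempty finite index set, let c : ι → ℝ and d : ι → ℝ be functions with c(i) > 0 and d(i) > 0 for all i, and suppose i* ∈ ι satisfies d(i*) < d(i) for all i ≠ i*. Then lim_{σ → 0⁺} [ c(i*)·Q(d(i*)/(2σ)) ] / [ Σ_{i∈ι} c(i)·Q(d(i)/(2σ)) ] = 1. -/
open Filter

/-- The Gaussian tail function `Q(x) = ∫_x^∞ (1/√(2π)) e^{−t²/2} dt`. -/
noncomputable def gaussQ (x : ℝ) : ℝ :=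
  ∫ t in Set.Ioi x, (1 / Real.sqrt (2 * Real.pi)) * Real.exp (-t ^ 2 / 2)

/-! After the substitution `t = x + u`, `exp (x ^ 2 / 2) * Q x` is the integral of `exp (-(x * u))`
against the Gaussian density over `u > 0`, so it is antitone in `x`. Comparing its values at
`a * s ≤ b * s` gives `Q (b * s) ≤ exp (-((b ^ 2 - a ^ 2) / 2 * s ^ 2)) * Q (a * s)`: for `|a| < b`
the tail at `b * s` is negligible against the one at `a * s` as `s → ∞`. Taking `s = 1 / (2 * σ)`,
every other term of the union bound is negligible against the minimum-distance one. -/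

section

open Asymptotics MeasureTheory ProbabilityTheory Real Set

theorem isEquivalent_sum_of_isLittleO {ι α E : Type*} [NormedAddCommGroup E] {l : Filter α}
    {s : Finset ι} {f : ι → α → E} {j : ι} (hj : j ∈ s)
    (h : ∀ i ∈ s, i ≠ j → f i =o[l] f j) : (fun x ↦ ∑ i ∈ s, f i x) ~[l] f j := by
  classical
  have hrest : (fun x ↦ ∑ i ∈ s.erase j, f i x) =o[l] f j :=
    .fun_sum fun i hi ↦ h i (Finset.mem_of_mem_erase hi) (Finset.ne_of_mem_erase hi)
  simpa only [← Finset.add_sum_erase s _ hj] using! IsEquivalent.refl.add_isLittleO hrest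

theorem gaussQ_eq_setIntegral_gaussianPDFReal (x : ℝ) :
    gaussQ x = ∫ t in Ioi x, gaussianPDFReal 0 1 t := by
  simp [gaussQ, gaussianPDFReal]

theorem gaussQ_eq_gaussianReal_real_Ioi (x : ℝ) : gaussQ x = (gaussianReal 0 1).real (Ioi x) := by
  rw [gaussQ_eq_setIntegral_gaussianPDFReal, measureReal_def,
    gaussianReal_apply_eq_integral 0 one_ne_zero,
    ENNReal.toReal_ofReal (integral_nonneg (gaussianPDFReal_nonneg 0 1))]

theorem gaussQ_pos (x : ℝ) : 0 < gaussQ x := by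
  have := (gaussianReal_absolutelyContinuous' 0 one_ne_zero).isOpenPosMeasure
  rw [gaussQ_eq_gaussianReal_real_Ioi]
  exact ENNReal.toReal_pos (isOpen_Ioi.measure_pos _ nonempty_Ioi).ne' (measure_ne_top _ _)

theorem exp_mul_gaussianPDFReal_add (x u : ℝ) :
    exp (x ^ 2 / 2) * gaussianPDFReal 0 1 (u + x) = exp (-(x * u)) * gaussianPDFReal 0 1 u := by
  simp only [gaussianPDFReal, mul_left_comm (exp _), ← exp_add, NNReal.coe_one]
  ring_nf

theorem integrable_exp_mul_gaussianPDFReal (x : ℝ) :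
    Integrable fun u ↦ exp (-(x * u)) * gaussianPDFReal 0 1 u := by
  simp only [← exp_mul_gaussianPDFReal_add]
  exact ((integrable_gaussianPDFReal 0 1).comp_add_right x).const_mul _

theorem exp_mul_gaussQ_eq_setIntegral (x : ℝ) :
    exp (x ^ 2 / 2) * gaussQ x = ∫ u in Ioi 0, exp (-(x * u)) * gaussianPDFReal 0 1 u := by
  have hshift : gaussQ x = ∫ u in Ioi 0, gaussianPDFReal 0 1 (u + x) := by
    rw [gaussQ_eq_setIntegral_gaussianPDFReal,
      ← (measurePreserving_add_right volume x).setIntegral_preimage_emb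
        (measurableEmbedding_addRight x), preimage_add_const_Ioi, sub_self]
  simp only [hshift, ← integral_const_mul, exp_mul_gaussianPDFReal_add]

theorem antitone_exp_mul_gaussQ : Antitone fun x ↦ exp (x ^ 2 / 2) * gaussQ x := by
  intro x y hxy
  simp only [exp_mul_gaussQ_eq_setIntegral]
  refine setIntegral_mono_on (integrable_exp_mul_gaussianPDFReal y).integrableOn
    (integrable_exp_mul_gaussianPDFReal x).integrableOn measurableSet_Ioi fun u hu ↦ ?_
  have hu : 0 ≤ u := (mem_Ioi.mp hu).le
  gcongr
  exact gaussianPDFReal_nonneg 0 1 u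

theorem gaussQ_le_exp_mul_gaussQ {x y : ℝ} (hxy : x ≤ y) :
    gaussQ y ≤ exp (-((y ^ 2 - x ^ 2) / 2)) * gaussQ x :=
  calc gaussQ y = exp (-(y ^ 2 / 2)) * (exp (y ^ 2 / 2) * gaussQ y) := by
        rw [← mul_assoc, ← exp_add, neg_add_cancel, exp_zero, one_mul]
    _ ≤ exp (-(y ^ 2 / 2)) * (exp (x ^ 2 / 2) * gaussQ x) := by
        gcongr ?_ * ?_
        exact antitone_exp_mul_gaussQ hxy
    _ = exp (-((y ^ 2 - x ^ 2) / 2)) * gaussQ x := by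
        rw [← mul_assoc, ← exp_add]
        ring_nf

theorem isLittleO_gaussQ_mul_atTop {a b : ℝ} (hab : |a| < b) :
    (fun s ↦ gaussQ (b * s)) =o[atTop] fun s ↦ gaussQ (a * s) := by
  have hgap : 0 < (b ^ 2 - a ^ 2) / 2 := by
    linarith [sq_lt_sq.mpr (hab.trans_le (le_abs_self b))]
  have hdecay : Tendsto (fun s ↦ exp (-((b ^ 2 - a ^ 2) / 2 * s ^ 2))) atTop (nhds 0) :=
    tendsto_exp_neg_atTop_nhds_zero.comp
      ((tendsto_pow_atTop two_ne_zero).const_mul_atTop hgap)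
  have hbound : (fun s ↦ gaussQ (b * s)) =O[atTop]
      fun s ↦ exp (-((b ^ 2 - a ^ 2) / 2 * s ^ 2)) * gaussQ (a * s) := by
    refine .of_norm_eventuallyLE ?_
    filter_upwards [eventually_ge_atTop 0] with s hs
    rw [norm_of_nonneg (gaussQ_pos _).le]
    convert gaussQ_le_exp_mul_gaussQ
      (mul_le_mul_of_nonneg_right ((le_abs_self a).trans hab.le) hs) using 3
    ring
  refine hbound.trans_isLittleO ?_
  simpa only [one_mul] using
    ((isLittleO_one_iff ℝ).mpr hdecay).mul_isBigO (isBigO_refl (fun s ↦ gaussQ (a * s)) atTop)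

theorem isLittleO_gaussQ_div_two_mul {a b : ℝ} (hab : |a| < b) :
    (fun σ : ℝ ↦ gaussQ (b / (2 * σ))) =o[nhdsWithin 0 (Ioi 0)]
      fun σ ↦ gaussQ (a / (2 * σ)) := by
  have hscale : Tendsto (fun σ : ℝ ↦ (2 * σ)⁻¹) (nhdsWithin 0 (Ioi 0)) atTop := by
    simpa only [mul_inv] using tendsto_inv_nhdsGT_zero.const_mul_atTop (inv_pos.mpr two_pos)
  simpa only [div_eq_mul_inv] using! (isLittleO_gaussQ_mul_atTop hab).comp_tendsto hscale

end

theorem stmt_7_general {ι : Type*} [Fintype ι] (c d : ι → ℝ) (istar : ι) (hc : c istar ≠ 0)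
    (hmin : ∀ i, i ≠ istar → |d istar| < d i) :
    Tendsto
      (fun σ : ℝ =>
        c istar * gaussQ (d istar / (2 * σ)) / ∑ i, c i * gaussQ (d i / (2 * σ)))
      (nhdsWithin 0 (Set.Ioi 0)) (nhds 1) := by
  have hequiv := isEquivalent_sum_of_isLittleO (Finset.mem_univ istar) fun i _ hi ↦
    ((isLittleO_gaussQ_div_two_mul (hmin i hi)).const_mul_left (c i)).const_mul_right hc
  have hne (σ : ℝ) : c istar * gaussQ (d istar / (2 * σ)) ≠ 0 := mul_ne_zero hc (gaussQ_pos _).ne'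
  have hratio := (Asymptotics.isEquivalent_iff_tendsto_one (.of_forall hne)).mp hequiv
  simpa only [Pi.div_apply, inv_div, inv_one] using! hratio.inv₀ one_ne_zero

/-- High-SNR dominance of the minimum-distance term of a union bound: if `d i⋆ < d i`
for all `i ≠ i⋆`, then `c i⋆·Q(d i⋆/(2σ)) / Σ_i c i·Q(d i/(2σ)) → 1` as `σ → 0⁺`. -/
theorem stmt_7 {ι : Type*} [Fintype ι] [Nonempty ι] (c d : ι → ℝ)
    (hc : ∀ i, 0 < c i) (hd : ∀ i, 0 < d i) (istar : ι)
    (hmin : ∀ i, i ≠ istar → d istar < d i) :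
    Tendsto
      (fun σ : ℝ =>
        c istar * gaussQ (d istar / (2 * σ)) / ∑ i, c i * gaussQ (d i / (2 * σ)))
      (nhdsWithin 0 (Set.Ioi 0)) (nhds 1) :=
  stmt_7_general c d istar (hc istar).ne' fun i hi ↦
    (abs_of_pos (hd istar)).trans_lt (hmin i hi)
end

section
/- Let σ > 0, let 0 < p < 1, and let 0 < d2max ≤ d1max. Then sup { 1 − Q(d2/(2σ)) − p·Q((d1 − d2)/(2σ)) : 0 < d2 < d1 ≤ d1max, d2 ≤ d2max } ≥ sup { 1 − Q(d1/(2σ)) − p·Q((d2 − d1)/(2σ)) : 0 < d1 < d2 ≤ d2max }. -/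
theorem gaussQ_nonneg (x : ℝ) : 0 ≤ gaussQ x := by
  unfold gaussQ
  exact MeasureTheory.integral_nonneg fun t ↦ by positivity

section Separations

/-- The values of an objective `P` over the separations `0 < d2 < d1` admissible in Case I.
The arguments of `P` are the smaller and the larger separation, in this order, so that one `P`
serves both cases. -/
def caseOneValues (P : ℝ → ℝ → ℝ) (d1max d2max : ℝ) : Set ℝ :=
  {x | ∃ d1 d2 : ℝ, 0 < d2 ∧ d2 < d1 ∧ d1 ≤ d1max ∧ d2 ≤ d2max ∧ x = P d2 d1}

/-- The values of an objective `P`, a function of the smaller and the larger separation, over the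
separations `0 < d1 < d2` admissible in Case II. -/
def caseTwoValues (P : ℝ → ℝ → ℝ) (d2max : ℝ) : Set ℝ :=
  {x | ∃ d1 d2 : ℝ, 0 < d1 ∧ d1 < d2 ∧ d2 ≤ d2max ∧ x = P d1 d2}

variable {P : ℝ → ℝ → ℝ} {d1max d2max : ℝ}

-- The two senders exchange their separations, which preserves the value of the objective.
theorem caseTwoValues_subset_caseOneValues (h12 : d2max ≤ d1max) :
    caseTwoValues P d2max ⊆ caseOneValues P d1max d2max := by
  rintro _ ⟨d1, d2, d1_pos, d1_lt_d2, d2_le, rfl⟩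
  exact ⟨d2, d1, d1_pos, d1_lt_d2, d2_le.trans h12, d1_lt_d2.le.trans d2_le, rfl⟩

theorem caseTwoValues_nonempty (h2 : 0 < d2max) : (caseTwoValues P d2max).Nonempty :=
  ⟨_, d2max / 2, d2max, half_pos h2, half_lt_self h2, le_rfl, rfl⟩

theorem bddAbove_caseOneValues {C : ℝ} (hP : ∀ u v, P u v ≤ C) :
    BddAbove (caseOneValues P d1max d2max) := by
  refine ⟨C, ?_⟩
  rintro _ ⟨d1, d2, -, -, -, -, rfl⟩
  exact hP d2 d1

theorem sSup_caseTwoValues_le_sSup_caseOneValues {C : ℝ} (hP : ∀ u v, P u v ≤ C)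
    (h2 : 0 < d2max) (h12 : d2max ≤ d1max) :
    sSup (caseTwoValues P d2max) ≤ sSup (caseOneValues P d1max d2max) :=
  csSup_le_csSup (bddAbove_caseOneValues hP) (caseTwoValues_nonempty h2)
    (caseTwoValues_subset_caseOneValues h12)

end Separations

section Decoding

/-- The high-SNR correct-decoding probability for separations `u < v`, where the two source bits
disagree with probability `p`. Here `Q d` is the probability that the noise exceeds half of the
separation `d`; for Gaussian noise of standard deviation `σ` it is `gaussQ (d / (2 * σ))`. -/
def correctDecodingProb (Q : ℝ → ℝ) (p u v : ℝ) : ℝ :=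
  1 - Q u - p * Q (v - u)

variable {Q : ℝ → ℝ} {p : ℝ}

theorem correctDecodingProb_le_one (hQ : ∀ d, 0 ≤ Q d) (hp : 0 ≤ p) (u v : ℝ) :
    correctDecodingProb Q p u v ≤ 1 := by
  have disagree_nonneg : 0 ≤ p * Q (v - u) := mul_nonneg hp (hQ (v - u))
  unfold correctDecodingProb
  linarith [hQ u]

theorem stmt_10_general {d1max d2max : ℝ} (hQ : ∀ d, 0 ≤ Q d) (hp : 0 ≤ p)
    (h2 : 0 < d2max) (h12 : d2max ≤ d1max) :
    sSup (caseOneValues (correctDecodingProb Q p) d1max d2max)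
      ≥ sSup (caseTwoValues (correctDecodingProb Q p) d2max) :=
  sSup_caseTwoValues_le_sSup_caseOneValues (correctDecodingProb_le_one hQ hp) h2 h12

end Decoding

/-- The maximal high-SNR correct-decoding probability of Case II cannot exceed that of
Case I when `d2max ≤ d1max`. -/
theorem stmt_10 (σ p d1max d2max : ℝ) (hσ : 0 < σ) (hp : 0 < p) (hp1 : p < 1)
    (h2 : 0 < d2max) (h12 : d2max ≤ d1max) :
    sSup {x : ℝ | ∃ d1 d2 : ℝ, 0 < d2 ∧ d2 < d1 ∧ d1 ≤ d1max ∧ d2 ≤ d2max ∧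
        x = 1 - gaussQ (d2 / (2 * σ)) - p * gaussQ ((d1 - d2) / (2 * σ))}
      ≥ sSup {x : ℝ | ∃ d1 d2 : ℝ, 0 < d1 ∧ d1 < d2 ∧ d2 ≤ d2max ∧
          x = 1 - gaussQ (d1 / (2 * σ)) - p * gaussQ ((d2 - d1) / (2 * σ))} :=
  stmt_10_general (Q := fun d ↦ gaussQ (d / (2 * σ))) (fun _ ↦ gaussQ_nonneg _) hp.le h2 h12
end

section
/- Let ψ ∈ (0, π/2), let 0 < d2max ≤ d1max, and define F(d1, d2) = min( d1², min( d2², d1² + d2² − 2·d1·d2·cos ψ ) ) on the domain D = { (d1, d2) : 0 < d1 ≤ d1max, 0 < d2 ≤ d2max }. Set t = d1max/(2 cos ψ). If d1max² + d2max² − 2·d1max·d2max·cos ψ ≤ t² and t² ≤ d2max², then F attains its maximum over D at the point (d1max, t); otherwise F attains its maximum over D at (d1max, d2max). -/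
/-- The squared minimum distance among the dominant union-bound terms:
`F(d1, d2) = min(d1², min(d2², d1² + d2² − 2·d1·d2·cos ψ))`. -/
noncomputable def minSqDist (ψ d1 d2 : ℝ) : ℝ :=
  min (d1 ^ 2) (min (d2 ^ 2) (d1 ^ 2 + d2 ^ 2 - 2 * d1 * d2 * Real.cos ψ))

/-!
Write `g` for the third term of `minSqDist` and `t = d1max / (2 cos ψ)`. If a separation is at
most `t`, then `minSqDist` is at most `t²`. Otherwise `g` decides: it is convex in each
separation, at most `t²` on the edge `d1 = t`, and equal to `t²` at the corner `(d1max, t)`, so it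
is bounded by the larger of `t²` and its value at `(d1max, d2max)`. These two numbers are the
values of `minSqDist` at the two candidate points, as long as `t ≤ d2max`. When `d2max < t`, or
when `cos ψ ≤ 0`, the value at `(d1max, d2max)` is `d2max²`, which no point can exceed.
-/

/-- The squared distance between two points of the plane at distances `x` and `y` from the origin
whose directions enclose the angle `ψ`. It is the third term of `minSqDist`. -/
noncomputable def angleSqDist (ψ x y : ℝ) : ℝ :=
  x ^ 2 + y ^ 2 - 2 * x * y * Real.cos ψ

section

open Set

variable {ψ x y A B t : ℝ}

lemma angleSqDist_comm (ψ x y : ℝ) : angleSqDist ψ x y = angleSqDist ψ y x := by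
  unfold angleSqDist
  ring

lemma angleSqDist_eq_sq_add (ψ x y : ℝ) :
    angleSqDist ψ x y = y ^ 2 + x * (x - 2 * y * Real.cos ψ) := by
  unfold angleSqDist
  ring

lemma angleSqDist_le_sq_iff (hx : 0 < x) :
    angleSqDist ψ x y ≤ y ^ 2 ↔ x ≤ 2 * y * Real.cos ψ := by
  rw [angleSqDist_eq_sq_add, ← not_lt, lt_add_iff_pos_right, mul_pos_iff_of_pos_left hx, sub_pos,
    not_lt]

lemma sq_le_angleSqDist_iff (hx : 0 < x) :
    y ^ 2 ≤ angleSqDist ψ x y ↔ 2 * y * Real.cos ψ ≤ x := by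
  rw [angleSqDist_eq_sq_add, le_add_iff_nonneg_right, mul_nonneg_iff_of_pos_left hx, sub_nonneg]

lemma convexOn_angleSqDist (ψ y : ℝ) : ConvexOn ℝ univ fun x => angleSqDist ψ x y := by
  refine ⟨convex_univ, fun a _ b _ r s hr hs hrs => ?_⟩
  obtain rfl : s = 1 - r := by linarith
  have convexity_gap : 0 ≤ r * (1 - r) * (a - b) ^ 2 := by positivity
  simp only [angleSqDist, smul_eq_mul]
  linarith

lemma angleSqDist_le_max_left {a b : ℝ} (hx : x ∈ Icc a b) :
    angleSqDist ψ x y ≤ max (angleSqDist ψ a y) (angleSqDist ψ b y) :=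
  (convexOn_angleSqDist ψ y).le_max_of_mem_Icc (mem_univ a) (mem_univ b) hx

lemma angleSqDist_le_max_right {a b : ℝ} (hy : y ∈ Icc a b) :
    angleSqDist ψ x y ≤ max (angleSqDist ψ x a) (angleSqDist ψ x b) := by
  simpa only [angleSqDist_comm ψ x] using angleSqDist_le_max_left hy

lemma angleSqDist_le_max_sq (hA : A = 2 * t * Real.cos ψ) (hBA : B ≤ A) (hx : x ∈ Icc t A)
    (hy₀ : 0 < y) (hy : y ∈ Icc t B) :
    angleSqDist ψ x y ≤ max (t ^ 2) (angleSqDist ψ A B) := by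
  have left_edge : angleSqDist ψ t y ≤ t ^ 2 := by
    rw [angleSqDist_comm, angleSqDist_le_sq_iff hy₀, ← hA]
    exact hy.2.trans hBA
  have right_corner : angleSqDist ψ A t = t ^ 2 := by
    rw [angleSqDist_eq_sq_add, ← hA, sub_self, mul_zero, add_zero]
  have right_edge : angleSqDist ψ A y ≤ max (t ^ 2) (angleSqDist ψ A B) :=
    right_corner ▸ angleSqDist_le_max_right hy
  exact (angleSqDist_le_max_left hx).trans (max_le (le_max_of_le_left left_edge) right_edge)

lemma minSqDist_le_sq_left (ψ x y : ℝ) : minSqDist ψ x y ≤ x ^ 2 :=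
  min_le_left _ _

lemma minSqDist_le_sq_right (ψ x y : ℝ) : minSqDist ψ x y ≤ y ^ 2 :=
  (min_le_right _ _).trans (min_le_left _ _)

lemma minSqDist_le_angleSqDist (ψ x y : ℝ) : minSqDist ψ x y ≤ angleSqDist ψ x y :=
  (min_le_right _ _).trans (min_le_right _ _)

lemma minSqDist_eq_min_of_le (hy : 0 ≤ y) (hyx : y ≤ x) :
    minSqDist ψ x y = min (y ^ 2) (angleSqDist ψ x y) :=
  min_eq_right ((min_le_left _ _).trans (pow_le_pow_left₀ hy hyx 2))

lemma minSqDist_eq_sq_right (hy : 0 < y) (hyx : y ≤ x) (h : 2 * y * Real.cos ψ ≤ x) :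
    minSqDist ψ x y = y ^ 2 := by
  rw [minSqDist_eq_min_of_le hy.le hyx,
    min_eq_left ((sq_le_angleSqDist_iff (hy.trans_le hyx)).2 h)]

lemma minSqDist_eq_angleSqDist (hy : 0 < y) (hyx : y ≤ x) (h : x ≤ 2 * y * Real.cos ψ) :
    minSqDist ψ x y = angleSqDist ψ x y := by
  rw [minSqDist_eq_min_of_le hy.le hyx,
    min_eq_right ((angleSqDist_le_sq_iff (hy.trans_le hyx)).2 h)]

lemma minSqDist_le_max (hA : A = 2 * t * Real.cos ψ) (hBA : B ≤ A) (hx : x ∈ Ioc 0 A)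
    (hy : y ∈ Ioc 0 B) : minSqDist ψ x y ≤ max (t ^ 2) (angleSqDist ψ A B) := by
  rcases le_total x t with hxt | htx
  · exact le_max_of_le_left
      ((minSqDist_le_sq_left ψ x y).trans (pow_le_pow_left₀ hx.1.le hxt 2))
  rcases le_total y t with hyt | hty
  · exact le_max_of_le_left
      ((minSqDist_le_sq_right ψ x y).trans (pow_le_pow_left₀ hy.1.le hyt 2))
  exact (minSqDist_le_angleSqDist ψ x y).trans
    (angleSqDist_le_max_sq hA hBA ⟨htx, hx.2⟩ hy.1 ⟨hty, hy.2⟩)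

lemma minSqDist_le_of_angleSqDist_le_sq (hA : A = 2 * t * Real.cos ψ) (ht : 0 < t) (htB : t ≤ B)
    (hBA : B ≤ A) (hle : angleSqDist ψ A B ≤ t ^ 2) (hx : x ∈ Ioc 0 A) (hy : y ∈ Ioc 0 B) :
    minSqDist ψ x y ≤ minSqDist ψ A t := by
  rw [minSqDist_eq_sq_right ht (htB.trans hBA) hA.ge]
  exact (minSqDist_le_max hA hBA hx hy).trans_eq (max_eq_left hle)

lemma minSqDist_le_of_sq_le_angleSqDist (hA : A = 2 * t * Real.cos ψ)
    (hAB : A ≤ 2 * B * Real.cos ψ) (hBA : B ≤ A) (hge : t ^ 2 ≤ angleSqDist ψ A B)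
    (hx : x ∈ Ioc 0 A) (hy : y ∈ Ioc 0 B) : minSqDist ψ x y ≤ minSqDist ψ A B := by
  rw [minSqDist_eq_angleSqDist (hy.1.trans_le hy.2) hBA hAB]
  exact (minSqDist_le_max hA hBA hx hy).trans_eq (max_eq_right hge)

lemma minSqDist_le_of_two_mul_cos_le (h : 2 * B * Real.cos ψ ≤ A) (hBA : B ≤ A)
    (hy : y ∈ Ioc 0 B) : minSqDist ψ x y ≤ minSqDist ψ A B := by
  rw [minSqDist_eq_sq_right (hy.1.trans_le hy.2) hBA h]
  exact (minSqDist_le_sq_right ψ x y).trans (pow_le_pow_left₀ hy.1.le hy.2 2)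

lemma cos_pos_of_le_two_mul_cos (hA : 0 < A) (hB : 0 < B) (h : A ≤ 2 * B * Real.cos ψ) :
    0 < Real.cos ψ :=
  pos_of_mul_pos_right (hA.trans_le h) (by positivity)

lemma eq_two_mul_div_mul_cos (h : Real.cos ψ ≠ 0) :
    A = 2 * (A / (2 * Real.cos ψ)) * Real.cos ψ := by
  field_simp

end

-- When `cos ψ = 0` Lean's quotient `d1max / (2 * cos ψ)` is `0`, but no value of it would matter:
-- the first alternative would force `d1max ^ 2 + d2max ^ 2 ≤ d2max ^ 2`.
theorem stmt_17_general (ψ d1max d2max : ℝ) (h2 : 0 < d2max) (h12 : d2max ≤ d1max) :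
    ((d1max ^ 2 + d2max ^ 2 - 2 * d1max * d2max * Real.cos ψ
          ≤ (d1max / (2 * Real.cos ψ)) ^ 2 ∧
        (d1max / (2 * Real.cos ψ)) ^ 2 ≤ d2max ^ 2) →
      ((0 < d1max ∧ d1max ≤ d1max ∧ 0 < d1max / (2 * Real.cos ψ) ∧
          d1max / (2 * Real.cos ψ) ≤ d2max) ∧
        ∀ d1 d2 : ℝ, 0 < d1 → d1 ≤ d1max → 0 < d2 → d2 ≤ d2max →
          minSqDist ψ d1 d2 ≤ minSqDist ψ d1max (d1max / (2 * Real.cos ψ)))) ∧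
    (¬(d1max ^ 2 + d2max ^ 2 - 2 * d1max * d2max * Real.cos ψ
          ≤ (d1max / (2 * Real.cos ψ)) ^ 2 ∧
        (d1max / (2 * Real.cos ψ)) ^ 2 ≤ d2max ^ 2) →
      ∀ d1 d2 : ℝ, 0 < d1 → d1 ≤ d1max → 0 < d2 → d2 ≤ d2max →
        minSqDist ψ d1 d2 ≤ minSqDist ψ d1max d2max) := by
  have hA : 0 < d1max := h2.trans_le h12
  refine ⟨fun ⟨hle, htB⟩ => ?_, fun hnot d1 d2 hd1 hd1_le hd2 hd2_le => ?_⟩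
  · have hcos := cos_pos_of_le_two_mul_cos hA h2 ((angleSqDist_le_sq_iff hA).1 (hle.trans htB))
    have ht : 0 < d1max / (2 * Real.cos ψ) := by positivity
    have ht_le := le_of_sq_le_sq htB h2.le
    exact ⟨⟨hA, le_rfl, ht, ht_le⟩, fun d1 d2 hd1 hd1_le hd2 hd2_le =>
      minSqDist_le_of_angleSqDist_le_sq (eq_two_mul_div_mul_cos hcos.ne') ht ht_le h12 hle
        ⟨hd1, hd1_le⟩ ⟨hd2, hd2_le⟩⟩
  · rcases le_total (2 * d2max * Real.cos ψ) d1max with hfar | hnear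
    · exact minSqDist_le_of_two_mul_cos_le hfar h12 ⟨hd2, hd2_le⟩
    have hcos := cos_pos_of_le_two_mul_cos hA h2 hnear
    have htB : d1max / (2 * Real.cos ψ) ≤ d2max := by
      rw [div_le_iff₀ (by positivity)]
      linarith
    have hge : (d1max / (2 * Real.cos ψ)) ^ 2 ≤ angleSqDist ψ d1max d2max :=
      le_of_not_ge fun hle => hnot ⟨hle, by gcongr⟩
    exact minSqDist_le_of_sq_le_angleSqDist (eq_two_mul_div_mul_cos hcos.ne') hnear h12 hge
      ⟨hd1, hd1_le⟩ ⟨hd2, hd2_le⟩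

/-- Lemma 9: for `ψ ∈ (0, π/2)` and `0 < d2max ≤ d1max`, with `t = d1max/(2 cos ψ)`,
the function `F` attains its maximum over
`D = {(d1,d2) : 0 < d1 ≤ d1max, 0 < d2 ≤ d2max}` at `(d1max, t)` if
`d1max² + d2max² − 2·d1max·d2max·cos ψ ≤ t² ≤ d2max²`, and at `(d1max, d2max)` otherwise. -/
theorem stmt_17 (ψ d1max d2max : ℝ) (hψ0 : 0 < ψ) (hψ : ψ < Real.pi / 2)
    (h2 : 0 < d2max) (h12 : d2max ≤ d1max) :
    ((d1max ^ 2 + d2max ^ 2 - 2 * d1max * d2max * Real.cos ψ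
          ≤ (d1max / (2 * Real.cos ψ)) ^ 2 ∧
        (d1max / (2 * Real.cos ψ)) ^ 2 ≤ d2max ^ 2) →
      ((0 < d1max ∧ d1max ≤ d1max ∧ 0 < d1max / (2 * Real.cos ψ) ∧
          d1max / (2 * Real.cos ψ) ≤ d2max) ∧
        ∀ d1 d2 : ℝ, 0 < d1 → d1 ≤ d1max → 0 < d2 → d2 ≤ d2max →
          minSqDist ψ d1 d2 ≤ minSqDist ψ d1max (d1max / (2 * Real.cos ψ)))) ∧
    (¬(d1max ^ 2 + d2max ^ 2 - 2 * d1max * d2max * Real.cos ψ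
          ≤ (d1max / (2 * Real.cos ψ)) ^ 2 ∧
        (d1max / (2 * Real.cos ψ)) ^ 2 ≤ d2max ^ 2) →
      ∀ d1 d2 : ℝ, 0 < d1 → d1 ≤ d1max → 0 < d2 → d2 ≤ d2max →
        minSqDist ψ d1 d2 ≤ minSqDist ψ d1max d2max) :=
  stmt_17_general ψ d1max d2max h2 h12
end
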